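/- arXiv:2404.04836 — 3 statements merged into one kernel-verified Lean document; each statement's English description precedes it below -/
import Mathlib

section
/- Let d ≥ 1 and let C₀, k₀, a₀, α be positive real constants, and fix m∞ > 0 and n∞ ≥ 0. Suppose m, n : ℝ × ℝ^d → ℝ and u : ℝ × ℝ^d → ℝ^d are continuously differentiable, with m(t,x) > 0 and n(t,x) > 0 for all (t,x), and that they solve the inviscid liquid–gas two-phase flow system pointwise: ∂ₜm + div(m u) = 0, ∂ₜn + div(n u) = 0, and for each component i, ∂ₜ(m uᵢ) + Σⱼ ∂_{xⱼ}(m uᵢ uⱼ) + ∂_{xᵢ}P = −α m uᵢ, where P := 𝒫(m, a₀ n/m). Then, setting s := a₀ n/m, c̃ := a₀ (n/m − n∞/m∞), D := sqrt(((1+s)·m − k₀)² + 4·k₀·s·m) and P_m := C₀·(1 + s + (((1+s)·m − k₀)·(1+s) + 2·k₀·s)/D), the following equations hold pointwise: ∂ₜP + (u·∇)P + P_m · m · div u = 0; ∂ₜu + (u·∇)u + (1/m)∇P = −α u; ∂ₜc̃ + (u·∇)c̃ = 0. -/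
open scoped BigOperators

/-- Partial derivative in time of a function on `ℝ × ℝ^d`. -/
noncomputable def dtime {d : ℕ} (f : ℝ × (Fin d → ℝ) → ℝ) (p : ℝ × (Fin d → ℝ)) : ℝ :=
  fderiv ℝ f p ((1 : ℝ), (0 : Fin d → ℝ))

/-- Partial derivative in the `i`-th space direction of a function on `ℝ × ℝ^d`. -/
noncomputable def dspace {d : ℕ} (f : ℝ × (Fin d → ℝ) → ℝ) (i : Fin d)
    (p : ℝ × (Fin d → ℝ)) : ℝ :=
  fderiv ℝ f p ((0 : ℝ), Pi.single i (1 : ℝ))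

/-- Spatial divergence `div u = ∑ i, ∂ᵢ uᵢ`. -/
noncomputable def divg {d : ℕ} (u : ℝ × (Fin d → ℝ) → Fin d → ℝ) (p : ℝ × (Fin d → ℝ)) : ℝ :=
  ∑ i, dspace (fun q => u q i) i p

/-- Convective derivative `(u · ∇) f = ∑ i, uᵢ ∂ᵢ f`. -/
noncomputable def conv {d : ℕ} (u : ℝ × (Fin d → ℝ) → Fin d → ℝ)
    (f : ℝ × (Fin d → ℝ) → ℝ) (p : ℝ × (Fin d → ℝ)) : ℝ :=
  ∑ i, u p i * dspace f i p

/-- The two-phase pressure law `𝒫(m,s)`. -/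
noncomputable def Plaw (C₀ k₀ m s : ℝ) : ℝ :=
  C₀ * ((1 + s) * m - k₀ + Real.sqrt (((1 + s) * m - k₀) ^ 2 + 4 * k₀ * s * m))

theorem mat_eq {d : ℕ} (f : ℝ × (Fin d → ℝ) → ℝ) (u : ℝ × (Fin d → ℝ) → Fin d → ℝ)
    (p : ℝ × (Fin d → ℝ)) :
    dtime f p + (∑ j, u p j * dspace f j p) = fderiv ℝ f p ((1 : ℝ), u p) := by
  have h : ((1 : ℝ), u p) = ((1 : ℝ), (0 : Fin d → ℝ))
      + ∑ j, u p j • ((0 : ℝ), (Pi.single j (1 : ℝ) : Fin d → ℝ)) := by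
    apply Prod.ext
    · simp [Prod.fst_sum]
    · ext k
      simp [Prod.snd_sum, Finset.sum_apply, Pi.single_apply]
  rw [h, map_add, map_sum]
  simp only [map_smul, smul_eq_mul, dtime, dspace]

theorem dspace_mul {d : ℕ} (f g : ℝ × (Fin d → ℝ) → ℝ) (p : ℝ × (Fin d → ℝ)) (i : Fin d)
    (hf : DifferentiableAt ℝ f p) (hg : DifferentiableAt ℝ g p) :
    dspace (fun q => f q * g q) i p = f p * dspace g i p + g p * dspace f i p := by
  unfold dspace
  rw [fderiv_fun_mul hf hg]
  simp

theorem dtime_mul {d : ℕ} (f g : ℝ × (Fin d → ℝ) → ℝ) (p : ℝ × (Fin d → ℝ))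
    (hf : DifferentiableAt ℝ f p) (hg : DifferentiableAt ℝ g p) :
    dtime (fun q => f q * g q) p = f p * dtime g p + g p * dtime f p := by
  unfold dtime
  rw [fderiv_fun_mul hf hg]
  simp

theorem div_mul_eq {d : ℕ} (f : ℝ × (Fin d → ℝ) → ℝ) (u : ℝ × (Fin d → ℝ) → Fin d → ℝ)
    (p : ℝ × (Fin d → ℝ))
    (hf : DifferentiableAt ℝ f p) (hu : ∀ i, DifferentiableAt ℝ (fun q => u q i) p) :
    divg (fun q i => f q * u q i) p = f p * divg u p + ∑ j, u p j * dspace f j p := by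
  unfold divg
  rw [Finset.mul_sum, ← Finset.sum_add_distrib]
  exact Finset.sum_congr rfl fun i _ => dspace_mul f (fun q => u q i) p i hf (hu i)

/-- Reformulation of the inviscid liquid–gas two-phase flow system in the unknowns
`(P, u, c̃)`: if `(m, n, u)` solves the original system, then the pressure `P`, the
velocity `u` and `c̃ = a₀(n/m − nInf/mInf)` solve the reformulated system. -/
theorem two_phase_reformulation {d : ℕ} (hd : 1 ≤ d)
    (C₀ k₀ a₀ α mInf nInf : ℝ)
    (hC₀ : 0 < C₀) (hk₀ : 0 < k₀) (ha₀ : 0 < a₀) (hα : 0 < α)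
    (hmInf : 0 < mInf) (hnInf : 0 ≤ nInf)
    (m n : ℝ × (Fin d → ℝ) → ℝ) (u : ℝ × (Fin d → ℝ) → Fin d → ℝ)
    (hm : ContDiff ℝ 1 m) (hn : ContDiff ℝ 1 n) (hu : ContDiff ℝ 1 u)
    (hmpos : ∀ p, 0 < m p) (hnpos : ∀ p, 0 < n p)
    (heqm : ∀ p, dtime m p + divg (fun q i => m q * u q i) p = 0)
    (heqn : ∀ p, dtime n p + divg (fun q i => n q * u q i) p = 0)
    (heqmom : ∀ p i, dtime (fun q => m q * u q i) p
        + (∑ j, dspace (fun q => m q * u q i * u q j) j p)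
        + dspace (fun q => Plaw C₀ k₀ (m q) (a₀ * n q / m q)) i p
      = -α * (m p * u p i)) :
    ∀ p,
      (dtime (fun q => Plaw C₀ k₀ (m q) (a₀ * n q / m q)) p
          + conv u (fun q => Plaw C₀ k₀ (m q) (a₀ * n q / m q)) p
          + (C₀ * (1 + (a₀ * n p / m p)
              + (((1 + (a₀ * n p / m p)) * m p - k₀) * (1 + (a₀ * n p / m p))
                  + 2 * k₀ * (a₀ * n p / m p))
                / Real.sqrt (((1 + (a₀ * n p / m p)) * m p - k₀) ^ 2
                    + 4 * k₀ * (a₀ * n p / m p) * m p)))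
            * m p * divg u p = 0) ∧
      (∀ i, dtime (fun q => u q i) p
          + (∑ j, u p j * dspace (fun q => u q i) j p)
          + (1 / m p) * dspace (fun q => Plaw C₀ k₀ (m q) (a₀ * n q / m q)) i p
        = -α * u p i) ∧
      (dtime (fun q => a₀ * (n q / m q - nInf / mInf)) p
          + conv u (fun q => a₀ * (n q / m q - nInf / mInf)) p = 0) := by
  intro p
  have dm : ∀ p, DifferentiableAt ℝ m p := fun p => (hm.differentiable (by norm_num)) p
  have dn : ∀ p, DifferentiableAt ℝ n p := fun p => (hn.differentiable (by norm_num)) p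
  have du : ∀ i, DifferentiableAt ℝ (fun q => u q i) p := fun i =>
    (differentiableAt_pi.1 ((hu.differentiable (by norm_num)) p)) i
  have hmp := hmpos p
  have hnp := hnpos p
  have Em : fderiv ℝ m p ((1 : ℝ), u p) = - (m p * divg u p) := by
    have h := heqm p
    rw [div_mul_eq m u p (dm p) du] at h
    have := mat_eq m u p
    linarith
  have En : fderiv ℝ n p ((1 : ℝ), u p) = - (n p * divg u p) := by
    have h := heqn p
    rw [div_mul_eq n u p (dn p) du] at h
    have := mat_eq n u p
    linarith
  refine ⟨?_, ?_, ?_⟩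
  · have hP : (fun q => Plaw C₀ k₀ (m q) (a₀ * n q / m q)) = fun q =>
        C₀ * ((m q + a₀ * n q - k₀)
          + Real.sqrt ((m q + a₀ * n q - k₀) ^ 2 + 4 * k₀ * (a₀ * n q))) := by
      funext q
      have := (hmpos q).ne'
      unfold Plaw
      have h1 : (1 + a₀ * n q / m q) * m q = m q + a₀ * n q := by field_simp
      have h2 : 4 * k₀ * (a₀ * n q / m q) * m q = 4 * k₀ * (a₀ * n q) := by field_simp
      rw [h1, h2]
    have h1 : (1 + a₀ * n p / m p) * m p = m p + a₀ * n p := by field_simp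
    have h2 : 4 * k₀ * (a₀ * n p / m p) * m p = 4 * k₀ * (a₀ * n p) := by field_simp
    have hpos : 0 < (m p + a₀ * n p - k₀) ^ 2 + 4 * k₀ * (a₀ * n p) := by positivity
    have hS : 0 < Real.sqrt ((m p + a₀ * n p - k₀) ^ 2 + 4 * k₀ * (a₀ * n p)) :=
      Real.sqrt_pos.2 hpos
    have hA : HasFDerivAt (fun q => m q + a₀ * n q - k₀)
        (fderiv ℝ m p + a₀ • fderiv ℝ n p) p :=
      ((dm p).hasFDerivAt.add ((dn p).hasFDerivAt.const_mul a₀)).sub_const k₀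
    have hB := (((hA.pow 2).add
      (((dn p).hasFDerivAt.const_mul a₀).const_mul (4 * k₀))).sqrt hpos.ne')
    have hF := ((hA.add hB).const_mul C₀).fderiv
    have hE := mat_eq (fun q => Plaw C₀ k₀ (m q) (a₀ * n q / m q)) u p
    unfold conv
    rw [hE, hP]
    erw [hF]
    rw [h1, h2]
    simp [Em, En]
    generalize Real.sqrt ((m p + a₀ * n p - k₀) ^ 2 + 4 * k₀ * (a₀ * n p)) = S at *
    field_simp
    ring
  · intro i
    have h := heqmom p i
    have e1 := dtime_mul m (fun q => u q i) p (dm p) (du i)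
    have e2 : (∑ j, dspace (fun q => m q * u q i * u q j) j p)
        = u p i * divg (fun q i => m q * u q i) p
          + m p * ∑ j, u p j * dspace (fun q => u q i) j p := by
      unfold divg
      rw [Finset.mul_sum, Finset.mul_sum, ← Finset.sum_add_distrib]
      refine Finset.sum_congr rfl fun j _ => ?_
      rw [dspace_mul (fun q => m q * u q i) (fun q => u q j) p j ((dm p).mul (du i)) (du j),
        dspace_mul m (fun q => u q i) p j (dm p) (du i),
        dspace_mul m (fun q => u q j) p j (dm p) (du j)]
      ring
    have h3 := heqm p
    rw [e1, e2] at h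
    have h4 : m p * (dtime (fun q => u q i) p
          + (∑ j, u p j * dspace (fun q => u q i) j p)
          + (1 / m p) * dspace (fun q => Plaw C₀ k₀ (m q) (a₀ * n q / m q)) i p)
        = m p * (-α * u p i) := by
      have h5 : m p * ((1 / m p) * dspace (fun q => Plaw C₀ k₀ (m q) (a₀ * n q / m q)) i p)
          = dspace (fun q => Plaw C₀ k₀ (m q) (a₀ * n q / m q)) i p := by field_simp
      rw [mul_add, h5]
      linear_combination h - u p i * h3
    exact mul_left_cancel₀ hmp.ne' h4
  · unfold conv
    rw [mat_eq]
    have hF := ((((dn p).hasFDerivAt.mul ((hasDerivAt_inv hmp.ne').comp_hasFDerivAt p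
      (dm p).hasFDerivAt)).sub_const (nInf / mInf)).const_mul a₀).fderiv
    simp only [div_eq_mul_inv] at hF ⊢
    erw [hF]
    simp [Em, En]
    field_simp
    ring
end

section
/- Let C₀ > 0, k₀ > 0, m > 0 and s ≥ 0 be real numbers, and assume that s > 0 or m > k₀. Then, with P := 𝒫(m,s), the denominator 2·C₀·(1+s)·P + 4·k₀·C₀²·s is positive and the pressure law can be inverted for the liquid mass: (P² + 2·k₀·C₀·P) / (2·C₀·(1+s)·P + 4·k₀·C₀²·s) = m. -/
/-- If `s > 0` or `m > k₀` then, with `P = 𝒫(m,s)`, the denominator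
`2C₀(1+s)P + 4k₀C₀²s` is positive and the pressure law can be inverted for the liquid
mass: `(P² + 2k₀C₀P) / (2C₀(1+s)P + 4k₀C₀²s) = m`. -/
theorem pressure_inversion (C₀ k₀ m s : ℝ)
    (hC₀ : 0 < C₀) (hk₀ : 0 < k₀) (hm : 0 < m) (hs : 0 ≤ s)
    (h : 0 < s ∨ k₀ < m) :
    0 < 2 * C₀ * (1 + s) * Plaw C₀ k₀ m s + 4 * k₀ * C₀ ^ 2 * s ∧
    (Plaw C₀ k₀ m s ^ 2 + 2 * k₀ * C₀ * Plaw C₀ k₀ m s)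
        / (2 * C₀ * (1 + s) * Plaw C₀ k₀ m s + 4 * k₀ * C₀ ^ 2 * s) = m := by
  have hRR : Real.sqrt (((1 + s) * m - k₀) ^ 2 + 4 * k₀ * s * m) ^ 2
      = ((1 + s) * m - k₀) ^ 2 + 4 * k₀ * s * m := Real.sq_sqrt (by positivity)
  have hAR : |(1 + s) * m - k₀| ≤ Real.sqrt (((1 + s) * m - k₀) ^ 2 + 4 * k₀ * s * m) :=
    Real.abs_le_sqrt (by
      have : 0 ≤ 4 * k₀ * s * m := by positivity
      linarith)
  unfold Plaw
  generalize Real.sqrt (((1 + s) * m - k₀) ^ 2 + 4 * k₀ * s * m) = R at hRR hAR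
  have h1 : 0 ≤ (1 + s) * m - k₀ + R := by
    have := neg_abs_le ((1 + s) * m - k₀)
    linarith
  have hden : 0 < 2 * C₀ * (1 + s) * (C₀ * ((1 + s) * m - k₀ + R)) + 4 * k₀ * C₀ ^ 2 * s := by
    rcases h with h | h
    · positivity
    · have h2 : 0 < (1 + s) * m - k₀ + R := by
        have := abs_nonneg ((1 + s) * m - k₀)
        have := mul_nonneg hs hm.le
        linarith
      positivity
  refine ⟨hden, ?_⟩
  rw [div_eq_iff hden.ne']
  linear_combination C₀ ^ 2 * hRR
end

section
/- Let d ≥ 1 and κ₂, α > 0. Suppose P̃ : ℝ × ℝ^d → ℝ is three times continuously differentiable, ũ : ℝ × ℝ^d → ℝ^d is twice continuously differentiable, G̃₁ : ℝ × ℝ^d → ℝ is continuously differentiable, G̃₂ : ℝ × ℝ^d → ℝ^d, and pointwise ∂ₜP̃ + κ₂ div ũ = G̃₁ and ∂ₜũ + κ₂ ∇P̃ + α ũ = G̃₂. Then the effective flux Z := κ₂ ∇P̃ + α ũ satisfies pointwise the damped equation (1/α) ∂ₜZ + Z = (κ₂³/α²) ∇ΔP̃ − (κ₂²/α²) ∇(div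 Z) + (κ₂/α) ∇G̃₁ + G̃₂, where ΔP̃ := Σᵢ ∂²_{xᵢ} P̃ is the spatial Laplacian. -/
open scoped BigOperators

/-- Spatial Laplacian `Δf = ∑ i, ∂ᵢ∂ᵢ f`. -/
noncomputable def lap {d : ℕ} (f : ℝ × (Fin d → ℝ) → ℝ) (p : ℝ × (Fin d → ℝ)) : ℝ :=
  ∑ i, dspace (fun q => dspace f i q) i p

/-- Directional derivative of a `C^(n+1)` function is `C^n`. -/
theorem contDiff_dir {d : ℕ} {m n : WithTop ℕ∞} {f : ℝ × (Fin d → ℝ) → ℝ}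
    (hf : ContDiff ℝ n f) (hmn : m + 1 ≤ n) (v : ℝ × (Fin d → ℝ)) :
    ContDiff ℝ m (fun q => fderiv ℝ f q v) :=
  (hf.fderiv_right hmn).clm_apply contDiff_const

/-- Linearity of the directional derivative. -/
theorem fderiv_lin {d : ℕ} {f g : ℝ × (Fin d → ℝ) → ℝ} {p : ℝ × (Fin d → ℝ)} (a b : ℝ)
    (hf : DifferentiableAt ℝ f p) (hg : DifferentiableAt ℝ g p) (v : ℝ × (Fin d → ℝ)) :
    fderiv ℝ (fun q => a * f q + b * g q) p v = a * fderiv ℝ f p v + b * fderiv ℝ g p v := by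
  have h := ((hf.hasFDerivAt.const_mul a).add (hg.hasFDerivAt.const_mul b)).fderiv
  have h' : fderiv ℝ (fun q => a * f q + b * g q) p = a • fderiv ℝ f p + b • fderiv ℝ g p := h
  rw [h']
  simp

/-- Mixed second derivatives of a `C^2` function commute. -/
theorem dir_comm {d : ℕ} {f : ℝ × (Fin d → ℝ) → ℝ} (hf : ContDiff ℝ 2 f)
    (v w p : ℝ × (Fin d → ℝ)) :
    fderiv ℝ (fun q => fderiv ℝ f q v) p w = fderiv ℝ (fun q => fderiv ℝ f q w) p v := by
  have hd : DifferentiableAt ℝ (fderiv ℝ f) p :=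
    (hf.fderiv_right (m := 1) (by norm_num)).differentiable (by norm_num) p
  have hs : IsSymmSndFDerivAt ℝ f p := hf.contDiffAt.isSymmSndFDerivAt (by simp)
  have key : ∀ x y, fderiv ℝ (fun q => fderiv ℝ f q x) p y = fderiv ℝ (fderiv ℝ f) p y x := by
    intro x y
    rw [fderiv_clm_apply hd (differentiableAt_const x)]
    simp
  rw [key, key]
  exact hs.eq w v

/-- If `∂ₜP̃ + κ₂ div ũ = G̃₁` and `∂ₜũ + κ₂∇P̃ + αũ = G̃₂`, then the effective flux
`Z = κ₂∇P̃ + αũ` satisfies the damped equation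
`(1/α)∂ₜZ + Z = (κ₂³/α²)∇ΔP̃ − (κ₂²/α²)∇(div Z) + (κ₂/α)∇G̃₁ + G̃₂`. -/
theorem effective_flux_damped {d : ℕ} (hd : 1 ≤ d) (κ₂ α : ℝ)
    (hκ₂ : 0 < κ₂) (hα : 0 < α)
    (P : ℝ × (Fin d → ℝ) → ℝ) (u : ℝ × (Fin d → ℝ) → Fin d → ℝ)
    (G₁ : ℝ × (Fin d → ℝ) → ℝ) (G₂ : ℝ × (Fin d → ℝ) → Fin d → ℝ)
    (hP : ContDiff ℝ 3 P) (hu : ContDiff ℝ 2 u) (hG₁ : ContDiff ℝ 1 G₁)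
    (heq1 : ∀ p, dtime P p + κ₂ * divg u p = G₁ p)
    (heq2 : ∀ p i, dtime (fun q => u q i) p + κ₂ * dspace P i p + α * u p i = G₂ p i) :
    ∀ p i,
      (1 / α) * dtime (fun q => κ₂ * dspace P i q + α * u q i) p
          + (κ₂ * dspace P i p + α * u p i)
        = (κ₂ ^ 3 / α ^ 2) * dspace (fun q => lap P q) i p
          - (κ₂ ^ 2 / α ^ 2)
              * dspace (fun q => divg (fun r j => κ₂ * dspace P j r + α * u r j) q) i p
          + (κ₂ / α) * dspace G₁ i p + G₂ p i := by
  intro p i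
  have hα' : α ≠ 0 := hα.ne'
  have huj : ∀ j, ContDiff ℝ 2 (fun q => u q j) := fun j => contDiff_pi.1 hu j
  have hPj : ∀ j, ContDiff ℝ 2 (fun q => dspace P j q) := fun j =>
    contDiff_dir hP (by norm_num) _
  have hlap : ContDiff ℝ 1 (fun q => lap P q) :=
    ContDiff.sum fun j _ => contDiff_dir (hPj j) (by norm_num) _
  have hdiv : ContDiff ℝ 1 (fun q => divg u q) :=
    ContDiff.sum fun j _ => contDiff_dir (huj j) (by norm_num) _
  have hZ : (fun q => divg (fun r j => κ₂ * dspace P j r + α * u r j) q)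
      = fun q => κ₂ * lap P q + α * divg u q := by
    funext q
    simp only [divg, lap, Finset.mul_sum, ← Finset.sum_add_distrib]
    refine Finset.sum_congr rfl fun j _ => ?_
    exact fderiv_lin κ₂ α ((hPj j).differentiable (by norm_num) q)
      ((huj j).differentiable (by norm_num) q) _
  have h1 : dspace (fun q => divg (fun r j => κ₂ * dspace P j r + α * u r j) q) i p
      = κ₂ * dspace (fun q => lap P q) i p + α * dspace (fun q => divg u q) i p := by
    rw [hZ]
    exact fderiv_lin κ₂ α (hlap.differentiable (by norm_num) p)
      (hdiv.differentiable (by norm_num) p) _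
  have h2 : dtime (fun q => κ₂ * dspace P i q + α * u q i) p
      = κ₂ * dtime (fun q => dspace P i q) p + α * dtime (fun q => u q i) p :=
    fderiv_lin κ₂ α ((hPj i).differentiable (by norm_num) p)
      ((huj i).differentiable (by norm_num) p) _
  have h3 : dtime (fun q => dspace P i q) p = dspace (fun q => dtime P q) i p :=
    dir_comm (hP.of_le (by norm_num)) _ _ p
  have h4 : dspace (fun q => dtime P q) i p
      = dspace G₁ i p - κ₂ * dspace (fun q => divg u q) i p := by
    have e : (fun q => dtime P q) = fun q => 1 * G₁ q + (-κ₂) * divg u q := by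
      funext q
      linarith [heq1 q]
    rw [e]
    have := fderiv_lin 1 (-κ₂) (hG₁.differentiable (by norm_num) p)
      (hdiv.differentiable (by norm_num) p) ((0 : ℝ), Pi.single i (1 : ℝ))
    unfold dspace at *
    rw [this]
    ring
  rw [h1, h2, h3, h4, ← heq2 p i]
  field_simp
  ring
end
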